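/- arXiv:0801.0001 — 2 statements merged into one kernel-verified Lean document; each statement's English description precedes it below -/
import Mathlib

section
/- Let h ≥ 1 and let φ(x_1,…,x_h,y) = u_1x_1 + ⋯ + u_hx_h + vy be a linear form with nonzero integer coefficients u_1,…,u_h and v ≥ 1, and set ψ(x_1,…,x_h) = u_1x_1 + ⋯ + u_hx_h. Let 𝒜 = (A_1,…,A_h) be an h-tuple of nonempty finite sets of integers, let B be a set of integers, and let t ≥ 1 be an integer such that (𝒜,B) is t-complementing with respect to φ. Let g_min = min(ψ(𝒜)), and let G_min = {(a_1,…,a_h) ∈ A_1 × ⋯ × A_h : ψ(a_1,…,a_h) = g_min}. Then for every integer n, |G_min| · χ_B(n) = t − Σ χ_B([vn + g_min − ψ(a_1,…,a_h)]/v), where the sum is over all (a_1,…,a_h) ∈ A_1 × ⋯ × A_h with (a_1,…,a_h) ∉ G_min, and a summand is counted as 0 whenever v does not divide vn + g_min − ψ(a_1,…,a_h). -/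
/-!
Fix an integer `g`. Counting the representations of `v * n + g` by their tuple `a` gives
`t = ∑ a, χ_{vB}(v * n + g - ψ(a))`, because `a` determines its partner `b`. Each of the tuples
with `ψ(a) = g` contributes `χ_{vB}(v * n) = χ_B(n)`; moving the others to the left gives the
identity. For `g = min ψ(𝒜)` it is a recursion expressing `χ_B(n)` by values of `χ_B` at smaller
arguments.
-/

open scoped Classical

/-- The representation function associated to the linear form
`φ(x₁,…,x_h,y) = u₁x₁ + ⋯ + u_h x_h + v y`. -/
noncomputable def repFn {h : ℕ} (u : Fin h → ℤ) (v : ℤ) (A : Fin h → Finset ℤ)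
    (B : Set ℤ) (n : ℤ) : ℕ∞ :=
  {p : (Fin h → ℤ) × ℤ |
    (∀ i, p.1 i ∈ A i) ∧ p.2 ∈ B ∧ (∑ i, u i * p.1 i) + v * p.2 = n}.encard

/-- The characteristic function of a set `B` of integers. -/
noncomputable def chi (B : Set ℤ) (n : ℤ) : ℤ := if n ∈ B then 1 else 0

theorem encard_setOf_add_eq {α β G : Type*} [AddCommGroup G] (P : Finset α) (f : α → G)
    {k : β → G} (hk : Function.Injective k) (B : Set β) (m : G) :
    {p : α × β | p.1 ∈ P ∧ p.2 ∈ B ∧ f p.1 + k p.2 = m}.encard =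
      (P.filter fun a => m - f a ∈ k '' B).card := by
  have fst_injOn : Set.InjOn Prod.fst {p : α × β | p.1 ∈ P ∧ p.2 ∈ B ∧ f p.1 + k p.2 = m} := by
    rintro ⟨a, b⟩ ⟨-, -, hb⟩ ⟨_, b'⟩ ⟨-, -, hb'⟩ rfl
    exact Prod.ext rfl (hk (add_left_cancel (hb.trans hb'.symm)))
  rw [← fst_injOn.encard_image, ← Set.encard_coe_eq_coe_finsetCard]
  congr 1
  ext a
  simp [eq_sub_iff_add_eq']

theorem repFn_eq_card_filter {h : ℕ} (u : Fin h → ℤ) {v : ℤ} (hv : v ≠ 0)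
    (A : Fin h → Finset ℤ) (B : Set ℤ) (m : ℤ) :
    repFn u v A B m =
      ((Fintype.piFinset A).filter fun a => m - ∑ i, u i * a i ∈ (v * ·) '' B).card := by
  simpa only [repFn, Fintype.mem_piFinset] using
    encard_setOf_add_eq (Fintype.piFinset A) (fun a => ∑ i, u i * a i)
      (mul_right_injective₀ hv) B m

theorem sum_chi_eq_card_filter {α : Type*} (P : Finset α) (f : α → ℤ) (B : Set ℤ) :
    ∑ a ∈ P, chi B (f a) = (P.filter fun a => f a ∈ B).card :=
  (Finset.natCast_card_filter _ _).symm

theorem chi_image_apply {k : ℤ → ℤ} (hk : Function.Injective k) (B : Set ℤ) (n : ℤ) :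
    chi (k '' B) (k n) = chi B n := by
  simp only [chi, hk.mem_set_image]

theorem chi_image_mul_left {v : ℤ} (hv : v ≠ 0) (B : Set ℤ) (m : ℤ) :
    chi ((v * ·) '' B) m = if v ∣ m then chi B (m / v) else 0 := by
  split_ifs with hvm
  · obtain ⟨n, rfl⟩ := hvm
    rw [Int.mul_ediv_cancel_left n hv]
    exact chi_image_apply (mul_right_injective₀ hv) B n
  · refine if_neg ?_
    rintro ⟨b, -, rfl⟩
    exact hvm (dvd_mul_right v b)

theorem sum_chi_image_mul_left_eq_of_repFn_eq {h : ℕ} (u : Fin h → ℤ) {v : ℤ} (hv : v ≠ 0)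
    (A : Fin h → Finset ℤ) (B : Set ℤ) {t : ℕ} {m : ℤ} (hm : repFn u v A B m = t) :
    ∑ a ∈ Fintype.piFinset A, chi ((v * ·) '' B) (m - ∑ i, u i * a i) = t := by
  rw [repFn_eq_card_filter u hv, Nat.cast_inj] at hm
  rw [sum_chi_eq_card_filter, hm]

theorem stmt6_general {h : ℕ} (u : Fin h → ℤ) {v : ℤ} (hv : v ≠ 0) (A : Fin h → Finset ℤ)
    (B : Set ℤ) {t : ℕ} (g n : ℤ) (hcomp : repFn u v A B (v * n + g) = t) :
    (((Fintype.piFinset A).filter fun a => (∑ i, u i * a i) = g).card : ℤ) * chi B n =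
      (t : ℤ) -
        ∑ a ∈ (Fintype.piFinset A).filter fun a => (∑ i, u i * a i) ≠ g,
          if v ∣ (v * n + g - ∑ i, u i * a i) then
            chi B ((v * n + g - ∑ i, u i * a i) / v)
          else 0 := by
  have contribution_of_eq : ∀ a ∈ (Fintype.piFinset A).filter fun a => (∑ i, u i * a i) = g,
      chi ((v * ·) '' B) (v * n + g - ∑ i, u i * a i) = chi B n := by
    intro a ha
    rw [(Finset.mem_filter.mp ha).2, add_sub_cancel_right]
    exact chi_image_apply (mul_right_injective₀ hv) B n
  simp only [← chi_image_mul_left hv]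
  rw [← sum_chi_image_mul_left_eq_of_repFn_eq u hv A B hcomp, eq_sub_iff_add_eq,
    ← Finset.sum_filter_add_sum_filter_not (Fintype.piFinset A) (fun a => (∑ i, u i * a i) = g),
    Finset.sum_congr rfl contribution_of_eq, Finset.sum_const, nsmul_eq_mul]

theorem stmt6 {h : ℕ} (hh : 1 ≤ h) (u : Fin h → ℤ) (v : ℤ)
    (hu : ∀ i, u i ≠ 0) (hv : 1 ≤ v)
    (A : Fin h → Finset ℤ) (hA : ∀ i, (A i).Nonempty)
    (B : Set ℤ) (t : ℕ) (ht : 1 ≤ t)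
    (hcomp : ∀ n : ℤ, repFn u v A B n = t)
    (S : Finset ℤ) (hS : S = (Fintype.piFinset A).image fun a => ∑ i, u i * a i)
    (hne : S.Nonempty) (gmin : ℤ) (hgmin : gmin = S.min' hne) :
    ∀ n : ℤ,
      (((Fintype.piFinset A).filter fun a => (∑ i, u i * a i) = gmin).card : ℤ) *
          chi B n =
        (t : ℤ) -
          ∑ a ∈ (Fintype.piFinset A).filter fun a => (∑ i, u i * a i) ≠ gmin,
            if v ∣ (v * n + gmin - ∑ i, u i * a i) then
              chi B ((v * n + gmin - ∑ i, u i * a i) / v)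
            else 0 :=
  fun n => stmt6_general u (by lia) A B gmin n (hcomp _)
end

section
/- Let h ≥ 1 and let φ(x_1,…,x_h,y) = u_1x_1 + ⋯ + u_hx_h + vy be a linear form with nonzero integer coefficients u_1,…,u_h and v ≥ 1, and set ψ(x_1,…,x_h) = u_1x_1 + ⋯ + u_hx_h. Let 𝒜 = (A_1,…,A_h) be an h-tuple of nonempty finite sets of integers with |A_i| > 1 for at least one i, let B be a set of integers, and let t ≥ 1 be an integer such that (𝒜,B) is t-complementing with respect to φ. Let g_min = min(ψ(𝒜)), g_max = max(ψ(𝒜)), and d = ⌊(g_max − g_min)/v⌋. If m is a positive integer and j is an integer such that χ_B(n) = χ_B(n + m) for all n ∈ {j, j+1, …, j+d−1}, then χ_B(n) = χ_B(n + m) for all integers n. -/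
/-!
Let `χ` be the characteristic function of the dilate `v * B`. Then `R n = ∑ χ (n - ψ a)` over
`a ∈ A₁ × ⋯ × A_h`, so if `R` has period `v m`, the difference `δ x = χ (x + v m) - χ x` satisfies
the linear recurrence `∑ δ (n - ψ a) = 0`, whose order is `g_max - g_min`. The extreme coefficients
are positive integers, so the recurrence can be solved in both directions and `δ` vanishes as soon
as it does on `g_max - g_min` consecutive integers. Off the multiples of `v` it vanishes anyway, and
a suitable interval of that length contains only the multiples `v n` with `j ≤ n < j + d`.
-/

theorem forall_int_of_forall_mem_Ico {P : ℤ → Prop} {j L : ℤ}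
    (right : ∀ n, (∀ k ∈ Set.Ico (n - L) n, P k) → P n)
    (left : ∀ n, (∀ k ∈ Set.Ioc n (n + L), P k) → P n)
    (window : ∀ n ∈ Set.Ico j (j + L), P n) (n : ℤ) : P n := by
  have widened (r : ℕ) : ∀ n ∈ Set.Ico (j - r) (j + L + r), P n := by
    induction r with
    | zero => simpa using window
    | succ r ih =>
      simp only [Set.mem_Ico, Set.mem_Ioc] at ih left right ⊢
      rintro n ⟨hlo, hhi⟩
      push_cast at hlo hhi
      rcases lt_or_ge n (j - r) with hleft | hleft
      · exact left n fun k hk => ih k (by omega)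
      rcases lt_or_ge n (j + L + r) with hright | hright
      · exact ih n ⟨hleft, hright⟩
      · exact right n fun k hk => ih k (by omega)
  exact widened ((n - j).natAbs + (n - j - L).natAbs + 1) n
    (by rw [Set.mem_Ico]; omega)

section Recurrence

variable {ι G : Type*} {s : Finset ι} {f : ι → ℤ} {a b j : ℤ}

theorem eq_zero_of_sum_sub_eq_zero [AddCommMonoid G] [IsAddTorsionFree G] {δ : ℤ → G} {g x : ℤ}
    (hg : g ∈ f '' s) (hsum : ∑ i ∈ s, δ (x + g - f i) = 0)
    (hother : ∀ i ∈ s, f i ≠ g → δ (x + g - f i) = 0) : δ x = 0 := by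
  have hfiber : (s.filter (f · = g)).card ≠ 0 := by
    obtain ⟨i, hi, rfl⟩ := hg
    exact Finset.card_ne_zero_of_mem (Finset.mem_filter.2 ⟨hi, rfl⟩)
  refine (nsmul_eq_zero_iff_right hfiber).1 ?_
  calc (s.filter (f · = g)).card • δ x
      = ∑ i ∈ s with f i = g, δ (x + g - f i) := by
        refine (Finset.sum_eq_card_nsmul fun i hi => ?_).symm
        rw [(Finset.mem_filter.1 hi).2, add_sub_cancel_right]
    _ = ∑ i ∈ s, δ (x + g - f i) :=
        Finset.sum_filter_of_ne fun i hi hne => by_contra fun hfi => hne (hother i hi hfi)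
    _ = 0 := hsum

theorem forall_eq_zero_of_sum_sub_eq_zero [AddCommMonoid G] [IsAddTorsionFree G] {δ : ℤ → G}
    (ha : IsLeast (f '' s) a) (hb : IsGreatest (f '' s) b)
    (hsum : ∀ n, ∑ i ∈ s, δ (n - f i) = 0)
    (window : ∀ n ∈ Set.Ico j (j + (b - a)), δ n = 0) (n : ℤ) : δ n = 0 := by
  have hle (i) (hi : i ∈ s) : a ≤ f i := ha.2 (Set.mem_image_of_mem f hi)
  have hge (i) (hi : i ∈ s) : f i ≤ b := hb.2 (Set.mem_image_of_mem f hi)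
  refine forall_int_of_forall_mem_Ico (fun n hn => ?_) (fun n hn => ?_) window n
  · refine eq_zero_of_sum_sub_eq_zero ha.1 (hsum _) fun i hi hne => hn _ ?_
    have := hle i hi
    have := hge i hi
    exact ⟨by omega, by omega⟩
  · refine eq_zero_of_sum_sub_eq_zero hb.1 (hsum _) fun i hi hne => hn _ ?_
    have := hle i hi
    have := hge i hi
    exact ⟨by omega, by omega⟩

theorem periodic_of_periodic_sum_sub [AddCommGroup G] [IsAddTorsionFree G] {χ : ℤ → G} {M : ℤ}
    (ha : IsLeast (f '' s) a) (hb : IsGreatest (f '' s) b)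
    (hsum : Function.Periodic (fun n => ∑ i ∈ s, χ (n - f i)) M)
    (window : ∀ n ∈ Set.Ico j (j + (b - a)), χ (n + M) = χ n) : Function.Periodic χ M := by
  intro n
  refine sub_eq_zero.1 <| forall_eq_zero_of_sum_sub_eq_zero (δ := fun x => χ (x + M) - χ x)
    ha hb (fun n => ?_) (fun n hn => sub_eq_zero.2 (window n hn)) n
  simpa only [Finset.sum_sub_distrib, sub_eq_zero, sub_add_eq_add_sub] using hsum n

end Recurrence

section Dilate

variable {v : ℤ}

theorem exists_forall_mul_mem_Ico_imp (hv : v ≠ 0) (j L : ℤ) :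
    ∃ x, ∀ n, v * n ∈ Set.Ico x (x + L) → n ∈ Set.Ico j (j + L / |v|) := by
  have hL : L < |v| * (L / |v|) + |v| := Int.lt_mul_ediv_self_add (abs_pos.2 hv)
  rcases hv.lt_or_gt with hneg | hpos
  · rw [abs_of_neg hneg] at hL ⊢
    refine ⟨v * (j + L / -v) + 1, fun n hn => ⟨?_, ?_⟩⟩ <;> by_contra! <;>
      nlinarith [hn.1, hn.2]
  · rw [abs_of_pos hpos] at hL ⊢
    refine ⟨v * (j - 1) + 1, fun n hn => ⟨?_, ?_⟩⟩ <;> by_contra! <;>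
      nlinarith [hn.1, hn.2]

theorem add_mul_mem_mul_image_iff {B : Set ℤ} {m x : ℤ} (hv : v ≠ 0)
    (hx : ∀ n, v * n = x → (n ∈ B ↔ n + m ∈ B)) :
    x + v * m ∈ (v * ·) '' B ↔ x ∈ (v * ·) '' B := by
  by_cases hdvd : v ∣ x
  · obtain ⟨n, rfl⟩ := hdvd
    rw [← mul_add, (mul_right_injective₀ hv).mem_set_image, (mul_right_injective₀ hv).mem_set_image]
    exact (hx n rfl).symm
  · have hnot {y : ℤ} (hy : ¬v ∣ y) : y ∉ (v * ·) '' B := by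
      rintro ⟨n, -, rfl⟩
      exact hy (dvd_mul_right v n)
    exact iff_of_false (hnot (by simpa using hdvd)) (hnot hdvd)

end Dilate

open Classical in
theorem repFn_eq_card {h : ℕ} (u : Fin h → ℤ) {v : ℤ} (hv : v ≠ 0) (A : Fin h → Finset ℤ)
    (B : Set ℤ) (n : ℤ) :
    repFn u v A B n =
      ((Fintype.piFinset A).filter fun a => n - ∑ i, u i * a i ∈ (v * ·) '' B).card := by
  rw [repFn, ← Set.encard_coe_eq_coe_finsetCard, ← Set.InjOn.encard_image (f := Prod.fst)]
  · congr 1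
    ext a
    simp [eq_sub_iff_add_eq']
  · rintro ⟨a, b⟩ ⟨-, -, hb⟩ ⟨a', b'⟩ ⟨-, -, hb'⟩ (rfl : a = a')
    exact Prod.ext rfl (mul_left_cancel₀ hv (add_left_cancel (hb.trans hb'.symm)))

theorem periodic_sum_indicator_of_periodic_repFn {h : ℕ} {u : Fin h → ℤ} {v : ℤ} (hv : v ≠ 0)
    {A : Fin h → Finset ℤ} {B : Set ℤ} {M : ℤ} (hR : Function.Periodic (repFn u v A B) M) :
    Function.Periodic (fun n => ∑ a ∈ Fintype.piFinset A,
      ((v * ·) '' B).indicator (1 : ℤ → ℤ) (n - ∑ i, u i * a i)) M := by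
  classical
  intro n
  have hcard := hR n
  rw [repFn_eq_card u hv, repFn_eq_card u hv, Nat.cast_inj] at hcard
  simp only [Set.indicator_apply, Pi.one_apply, Finset.sum_boole, hcard]

theorem stmt8_general {h : ℕ} (u : Fin h → ℤ) (v : ℤ) (hv : v ≠ 0) (A : Fin h → Finset ℤ)
    (B : Set ℤ) (m : ℤ) (hR : Function.Periodic (repFn u v A B) (v * m)) (gmin gmax : ℤ)
    (hgmin : IsLeast ((fun a => ∑ i, u i * a i) '' (Fintype.piFinset A : Set (Fin h → ℤ))) gmin)
    (hgmax : IsGreatest ((fun a => ∑ i, u i * a i) '' (Fintype.piFinset A : Set (Fin h → ℤ))) gmax)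
    (j : ℤ) (hper : ∀ n ∈ Set.Ico j (j + (gmax - gmin) / |v|), n ∈ B ↔ n + m ∈ B) (n : ℤ) :
    n ∈ B ↔ n + m ∈ B := by
  classical
  obtain ⟨x, hx⟩ := exists_forall_mul_mem_Ico_imp hv j (gmax - gmin)
  have hperiodic : Function.Periodic (((v * ·) '' B).indicator (1 : ℤ → ℤ)) (v * m) := by
    refine periodic_of_periodic_sum_sub (j := x) hgmin hgmax
      (periodic_sum_indicator_of_periodic_repFn hv hR) fun y hy => ?_
    have hmem := add_mul_mem_mul_image_iff hv fun n hn => hper n (hx n (hn ▸ hy))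
    simp only [Set.indicator_apply, hmem, Pi.one_apply]
  have hmem : v * (n + m) ∈ (v * ·) '' B ↔ v * n ∈ (v * ·) '' B := by
    rw [mul_add, ← Set.indicator_eq_one_iff_mem ℤ, hperiodic, Set.indicator_eq_one_iff_mem]
  simpa only [(mul_right_injective₀ hv).mem_set_image] using hmem.symm

theorem stmt8 {h : ℕ} (hh : 1 ≤ h) (u : Fin h → ℤ) (v : ℤ)
    (hu : ∀ i, u i ≠ 0) (hv : 1 ≤ v)
    (A : Fin h → Finset ℤ) (hA : ∀ i, (A i).Nonempty) (hA1 : ∃ i, 1 < (A i).card)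
    (B : Set ℤ) (t : ℕ) (ht : 1 ≤ t)
    (hcomp : ∀ n : ℤ, repFn u v A B n = t)
    (S : Finset ℤ) (hS : S = (Fintype.piFinset A).image fun a => ∑ i, u i * a i)
    (hne : S.Nonempty)
    (gmin gmax : ℤ) (hgmin : gmin = S.min' hne) (hgmax : gmax = S.max' hne)
    (d : ℕ) (hd : d = ((gmax - gmin) / v).toNat)
    (m : ℕ) (hm : 0 < m) (j : ℤ)
    (hper : ∀ n : ℤ, j ≤ n → n < j + d → (n ∈ B ↔ n + m ∈ B)) :
    ∀ n : ℤ, n ∈ B ↔ n + m ∈ B := by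
  subst hS hgmin hgmax
  refine stmt8_general u v (by omega) A B m (fun n => by rw [hcomp, hcomp]) _ _
    (by simpa only [Finset.coe_image] using Finset.isLeast_min' _ hne)
    (by simpa only [Finset.coe_image] using Finset.isGreatest_max' _ hne) j fun n hn => ?_
  rw [abs_of_pos (by omega), Set.mem_Ico] at hn
  exact hper n hn.1 (by omega)
end
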